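/- arXiv:2007.07876 — 3 statements merged into one kernel-verified Lean document; each statement's English description precedes it below -/
import Mathlib

section
/- Consider an admissible non-randomized contextual bandit algorithm that selects a policy π_t determined measurably by the history H_{t−1} and plays a_t = π_t(x_t) at each round, and that plays each of the K actions exactly once during the first K rounds (π_t ≡ t for t ≤ K). Fix δ ∈ (0,1) and set β_t = √(17 t log(2|F| t³/δ)/K). Then with probability at least 1 − δ/2, simultaneously for all t > K and all policies π : X → A: |E_x[f̂_t(x,π(x))] − E_x[f*(x,π(x))]| ≤ E_x[ β_t / Σ_{i=1}^{t−1} 1{π(x) = π_i(x)} ] + K β_t / t. -/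
/-!
Fix a competitor `f ∈ F` and write `Z_i = (f(x_i,a_i) - r_i)² - (f*(x_i,a_i) - r_i)²` for its excess
loss and `v_i = E_x[(f(x,π_i(x)) - f*(x,π_i(x)))²]` (`sqGap`). By realizability `Z_i` has
conditional mean `v_i`, and `Z_i² ≤ 4 (f(x_i,a_i) - f*(x_i,a_i))²`; hence
`exp (∑ (-Z_i/8 + v_i/16))` (`logMart` is its logarithm) is a supermartingale started at `1`
(`integral_step_le`, `integral_exp_logMart_le`). Markov's inequality and a union bound over `f ∈ F`
and `t ≥ 2`, using `∑_{t ≥ 2} t⁻³ ≤ 1`, give an event of probability at least `1 - δ/2` on which all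
these supermartingales at time `t - 1` stay below `2|F|t³/δ`. The least-squares property makes
`∑ Z_i ≤ 0` for `f = f̂_t`, so there `∑_{i<t} v_i ≤ 16 log(2|F|t³/δ)`.

The rest is deterministic (`abs_integral_gap_le`). With `D = f̂_t(x,π(x)) - f*(x,π(x))` and `N(x)` the
number of rounds `i < t` with `π_i(x) = π(x)`, which is at least one thanks to the initial rounds,
`|D| ≤ β/N + N D²/(4β)` pointwise, and `E_x[N D²] ≤ ∑_{i<t} v_i`. The definition of `β_t` makes the
second term at most `K β_t / t`.
-/

open MeasureTheory ProbabilityTheory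

/-- The history σ-algebra `H_t` generated by `(x_i, a_i, r_i)` for `1 ≤ i ≤ t`. -/
noncomputable def histFilt {Ω X : Type*} [MeasurableSpace X]
    (x : ℕ → Ω → X) (a : ℕ → Ω → ℕ) (r : ℕ → Ω → ℝ) (t : ℕ) :
    MeasurableSpace Ω :=
  ⨆ i ∈ Finset.Icc 1 t,
    MeasurableSpace.comap (fun ω => (x i ω, a i ω, r i ω)) inferInstance


/-! ### Squared gap of two reward functions -/

/-- The mean squared gap `E_x[(f(x, q(x)) - g(x, q(x)))²]` of two reward functions along the
policy `q`. -/
noncomputable def sqGap {X : Type*} [MeasurableSpace X] (Dx : Measure X)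
    (f g : X → ℕ → ℝ) (q : X → ℕ) : ℝ :=
  ∫ x', (f x' (q x') - g x' (q x')) ^ 2 ∂Dx

lemma integrable_of_abs_le {Ω : Type*} [MeasurableSpace Ω] {P : Measure Ω}
    [IsFiniteMeasure P] {h : Ω → ℝ} (hm : Measurable h) (C : ℝ) (hb : ∀ ω, |h ω| ≤ C) :
    Integrable h P :=
  Integrable.of_bound hm.aestronglyMeasurable C (ae_of_all _ hb)

lemma abs_sub_le_one_of_mem_Icc {u v : ℝ} (hu : u ∈ Set.Icc (0 : ℝ) 1)
    (hv : v ∈ Set.Icc (0 : ℝ) 1) : |u - v| ≤ 1 := by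
  rw [abs_le]; constructor <;> linarith [hu.1, hu.2, hv.1, hv.2]

lemma sqGap_nonneg {X : Type*} [MeasurableSpace X] (Dx : Measure X)
    (f g : X → ℕ → ℝ) (q : X → ℕ) : 0 ≤ sqGap Dx f g q :=
  integral_nonneg fun _ => sq_nonneg _

lemma sqGap_le_one {X : Type*} [MeasurableSpace X] (Dx : Measure X) [IsProbabilityMeasure Dx]
    (f g : X → ℕ → ℝ) (q : X → ℕ) (hf : ∀ x' k, f x' k ∈ Set.Icc (0 : ℝ) 1)
    (hg : ∀ x' k, g x' k ∈ Set.Icc (0 : ℝ) 1) : sqGap Dx f g q ≤ 1 := by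
  have := integral_mono_of_nonneg (μ := Dx)
    (f := fun x' => (f x' (q x') - g x' (q x')) ^ 2) (g := fun _ => (1 : ℝ))
    (ae_of_all _ fun _ => sq_nonneg _) (integrable_const _)
    (ae_of_all _ fun x' => (sq_le_one_iff_abs_le_one _).2
      (abs_sub_le_one_of_mem_Icc (hf x' _) (hg x' _)))
  simpa [sqGap] using this

lemma measurable_uncurry_of_countable {X : Type*} [MeasurableSpace X] {f : X → ℕ → ℝ}
    (hf : ∀ k, Measurable (fun x' => f x' k)) :
    Measurable (fun z : X × ℕ => f z.1 z.2) :=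
  measurable_from_prod_countable_left hf

/-! ### One step of the exponential supermartingale -/

/-- Freezing lemma: if `Y` is independent of `Z`, the expectation of `G(Y, Z)` is obtained by
integrating out `Z` first with `Y` frozen. -/
lemma integral_freeze {Ω Ω' X : Type*} [mΩ : MeasurableSpace Ω] [mΩ' : MeasurableSpace Ω']
    [MeasurableSpace X] (P : Measure Ω) [IsProbabilityMeasure P] (Y : Ω → Ω') (Z : Ω → X)
    (hY : Measurable Y) (hZ : Measurable Z) (hind : IndepFun Y Z P)
    (G : Ω' × X → ℝ) (hG : Measurable G) (C : ℝ) (hC : ∀ z, |G z| ≤ C) :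
    ∫ ω, G (Y ω, Z ω) ∂P = ∫ ω, ∫ x', G (Y ω, x') ∂(P.map Z) ∂P := by
  have hpY := Measure.isProbabilityMeasure_map (μ := P) hY.aemeasurable
  have hpZ := Measure.isProbabilityMeasure_map (μ := P) hZ.aemeasurable
  have h := (indepFun_iff_map_prod_eq_prod_map_map hY.aemeasurable hZ.aemeasurable).1 hind
  rw [← integral_map (μ := P) (φ := fun ω => (Y ω, Z ω)) (hY.prodMk hZ).aemeasurable
    hG.aestronglyMeasurable, h, integral_prod _ (integrable_of_abs_le hG C hC),
    integral_map hY.aemeasurable]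
  exact (hG.stronglyMeasurable.integral_prod_right').aestronglyMeasurable

/-- Frozen contexts: for an `H`-measurable weight `W` and an `H`-measurable random policy `q`, the
squared gap observed at a context independent of `H` averages to `sqGap`. -/
lemma integral_mul_sq_eq {Ω X : Type*} (H : MeasurableSpace Ω) [mΩ : MeasurableSpace Ω]
    [mX : MeasurableSpace X] (P : Measure Ω) [IsProbabilityMeasure P] (hH : H ≤ mΩ)
    (f g : X → ℕ → ℝ) (hfm : ∀ k, Measurable (fun x' => f x' k))
    (hgm : ∀ k, Measurable (fun x' => g x' k))
    (hf : ∀ x' k, f x' k ∈ Set.Icc (0 : ℝ) 1) (hg : ∀ x' k, g x' k ∈ Set.Icc (0 : ℝ) 1)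
    (Z : Ω → X) (hZ : Measurable Z) (hind : Indep (MeasurableSpace.comap Z inferInstance) H P)
    (q : Ω → X → ℕ) (hq : Measurable[H.prod mX] (fun z : Ω × X => q z.1 z.2))
    (W : Ω → ℝ) (hW : Measurable[H] W) (C : ℝ) (hC : ∀ ω, |W ω| ≤ C) :
    ∫ ω, W ω * (f (Z ω) (q ω (Z ω)) - g (Z ω) (q ω (Z ω))) ^ 2 ∂P
      = ∫ ω, W ω * sqGap (P.map Z) f g (q ω) ∂P := by
  have hind' : @IndepFun Ω Ω X mΩ H mX (fun ω => ω) Z P := by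
    refine (@IndepFun_iff_Indep Ω Ω X mΩ H mX (fun ω => ω) Z P).2 ?_
    have h0 : MeasurableSpace.comap (fun ω : Ω => ω) H = H := MeasurableSpace.comap_id
    rw [h0]
    exact hind.symm
  have hG : @Measurable (Ω × X) ℝ (H.prod mX) _
      (fun z : Ω × X => W z.1 * (f z.2 (q z.1 z.2) - g z.2 (q z.1 z.2)) ^ 2) := by
    have h2 : @Measurable (Ω × X) X (H.prod mX) _ Prod.snd := @measurable_snd Ω X H mX
    have h1 : @Measurable (Ω × X) Ω (H.prod mX) H Prod.fst := @measurable_fst Ω X H mX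
    have hp := h2.prodMk hq
    exact (hW.comp h1).mul ((((measurable_uncurry_of_countable hfm).comp hp).sub
      ((measurable_uncurry_of_countable hgm).comp hp)).pow_const 2)
  have hb : ∀ z : Ω × X, |W z.1 * (f z.2 (q z.1 z.2) - g z.2 (q z.1 z.2)) ^ 2| ≤ C := by
    intro z
    rw [abs_mul, abs_pow]
    have h1 := abs_sub_le_one_of_mem_Icc (hf z.2 (q z.1 z.2)) (hg z.2 (q z.1 z.2))
    exact (mul_le_of_le_one_right (abs_nonneg _) (pow_le_one₀ (abs_nonneg _) h1)).trans (hC _)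
  have := @integral_freeze Ω Ω X mΩ H mX P _ (fun ω => ω) Z (measurable_id'' hH) hZ hind'
    _ hG C hb
  rw [this]
  refine integral_congr_ae (ae_of_all _ fun ω => ?_)
  simp only [sqGap]
  rw [integral_const_mul]

/-- The numerical estimate behind the exponential moment: for `f, g, r ∈ [0,1]` the excess loss
`(f-r)² - (g-r)²` equals `(f-g)² - 2(f-g)(r-g)` and is at most `2|f-g|` in absolute value, so
the second-order bound on `exp` keeps half of the drift. -/
lemma exp_excess_le {u v w : ℝ} (hu : u ∈ Set.Icc (0 : ℝ) 1) (hv : v ∈ Set.Icc (0 : ℝ) 1)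
    (hw : w ∈ Set.Icc (0 : ℝ) 1) :
    Real.exp (-((u - w) ^ 2 - (v - w) ^ 2) / 8)
      ≤ 1 - (u - v) ^ 2 / 16 + (u - v) * (w - v) / 4 := by
  obtain ⟨hu0, hu1⟩ := hu
  obtain ⟨hv0, hv1⟩ := hv
  obtain ⟨hw0, hw1⟩ := hw
  set y := -((u - w) ^ 2 - (v - w) ^ 2) / 8 with hy
  have hy' : y = -((u - v) * (u + v - 2 * w)) / 8 := by rw [hy]; ring
  have hs : (u + v - 2 * w) ^ 2 ≤ 4 := by nlinarith
  have hd : (u - v) ^ 2 ≤ 1 := by nlinarith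
  have hy2 : y ^ 2 ≤ (u - v) ^ 2 / 16 := by
    rw [hy']
    nlinarith [mul_le_mul_of_nonneg_left hs (sq_nonneg (u - v))]
  have hy1 : |y| ≤ 1 := (sq_le_one_iff_abs_le_one _).1 (by linarith)
  have h := (abs_le.1 (Real.abs_exp_sub_one_sub_id_le hy1)).2
  have : y = -(u - v) ^ 2 / 8 + (u - v) * (w - v) / 4 := by rw [hy]; ring
  linarith

/-- One step of the supermartingale: multiplying an `H`-measurable nonnegative weight by
`exp(-Z/8 + v/16)`, with `Z` the excess loss and `v` its conditional drift, does not increase its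
expectation. -/
lemma integral_step_le {Ω X : Type*} (H : MeasurableSpace Ω) [mΩ : MeasurableSpace Ω]
    [mX : MeasurableSpace X] (P : Measure Ω) [IsProbabilityMeasure P] (hH : H ≤ mΩ)
    (f g : X → ℕ → ℝ) (hfm : ∀ k, Measurable (fun x' => f x' k))
    (hgm : ∀ k, Measurable (fun x' => g x' k))
    (hf : ∀ x' k, f x' k ∈ Set.Icc (0 : ℝ) 1) (hg : ∀ x' k, g x' k ∈ Set.Icc (0 : ℝ) 1)
    (Z : Ω → X) (hZ : Measurable Z) (hind : Indep (MeasurableSpace.comap Z inferInstance) H P)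
    (q : Ω → X → ℕ) (hq : Measurable[H.prod mX] (fun z : Ω × X => q z.1 z.2))
    (A : Ω → ℕ) (hA : Measurable A) (hAq : ∀ ω, A ω = q ω (Z ω))
    (R : Ω → ℝ) (hR : Measurable R) (hRr : ∀ ω, R ω ∈ Set.Icc (0 : ℝ) 1)
    (hmean : P[R | H ⊔ MeasurableSpace.comap Z inferInstance
      ⊔ MeasurableSpace.comap A inferInstance] =ᵐ[P] fun ω => g (Z ω) (A ω))
    (hv : Measurable[H] fun ω => sqGap (P.map Z) f g (q ω))
    (W : Ω → ℝ) (hW : Measurable[H] W) (C : ℝ) (hC : ∀ ω, |W ω| ≤ C) (hW0 : ∀ ω, 0 ≤ W ω) :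
    ∫ ω, W ω * Real.exp (-((f (Z ω) (A ω) - R ω) ^ 2 - (g (Z ω) (A ω) - R ω) ^ 2) / 8
        + sqGap (P.map Z) f g (q ω) / 16) ∂P ≤ ∫ ω, W ω ∂P := by
  have hpZ := Measure.isProbabilityMeasure_map (μ := P) hZ.aemeasurable
  set v : Ω → ℝ := fun ω => sqGap (P.map Z) f g (q ω) with hvdef
  have hv0 : ∀ ω, 0 ≤ v ω := fun ω => sqGap_nonneg _ _ _ _
  have hv1 : ∀ ω, v ω ≤ 1 := fun ω => sqGap_le_one _ _ _ _ hf hg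
  set W' : Ω → ℝ := fun ω => W ω * Real.exp (v ω / 16) with hW'def
  have hW'H : Measurable[H] W' :=
    hW.mul (Real.measurable_exp.comp (hv.div_const 16))
  have hW' : Measurable W' := hW'H.mono hH le_rfl
  have hC0 : ∀ ω : Ω, 0 ≤ C := fun ω => (abs_nonneg _).trans (hC ω)
  have hW'0 : ∀ ω, 0 ≤ W' ω := fun ω => mul_nonneg (hW0 ω) (Real.exp_pos _).le
  have hW'C : ∀ ω, |W' ω| ≤ C * Real.exp 1 := fun ω => by
    rw [abs_mul, abs_of_pos (Real.exp_pos _)]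
    exact mul_le_mul (hC ω) (Real.exp_le_exp.2 (by linarith [hv1 ω])) (Real.exp_pos _).le (hC0 ω)
  set fa : Ω → ℝ := fun ω => f (Z ω) (A ω) with hfa
  set ga : Ω → ℝ := fun ω => g (Z ω) (A ω) with hga
  have hfam : Measurable fa := (measurable_uncurry_of_countable hfm).comp (hZ.prodMk hA)
  have hgam : Measurable ga := (measurable_uncurry_of_countable hgm).comp (hZ.prodMk hA)
  have hd1 : ∀ ω, |fa ω - ga ω| ≤ 1 := fun ω => abs_sub_le_one_of_mem_Icc (hf _ _) (hg _ _)
  set B : Ω → ℝ := fun ω => W' ω * (fa ω - ga ω) with hB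
  have hBH : Measurable[H ⊔ MeasurableSpace.comap Z inferInstance
      ⊔ MeasurableSpace.comap A inferInstance] B := by
    have hZA := (Measurable.of_comap_le (le_sup_right.trans le_sup_left) :
      Measurable[H ⊔ MeasurableSpace.comap Z inferInstance
        ⊔ MeasurableSpace.comap A inferInstance] Z).prodMk
      (Measurable.of_comap_le le_sup_right)
    exact (hW'H.mono (le_sup_left.trans le_sup_left) le_rfl).mul
      (((measurable_uncurry_of_countable hfm).comp hZA).sub
        ((measurable_uncurry_of_countable hgm).comp hZA))
  have hBm : Measurable B := hW'.mul (hfam.sub hgam)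
  have hBC : ∀ ω, |B ω| ≤ C * Real.exp 1 := fun ω => by
    rw [hB, abs_mul]
    exact (mul_le_of_le_one_right (abs_nonneg _) (hd1 ω)).trans (hW'C ω)
  have abs1 : ∀ {s : ℝ}, s ∈ Set.Icc (0 : ℝ) 1 → |s| ≤ 1 := fun hs => by
    rw [abs_of_nonneg hs.1]; exact hs.2
  have hmulC : ∀ {s : Ω → ℝ} {T : Ω → ℝ}, (∀ ω, |T ω| ≤ C * Real.exp 1) → (∀ ω, |s ω| ≤ 1) →
      ∀ ω, |T ω * s ω| ≤ C * Real.exp 1 := fun hT hs ω => by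
    rw [abs_mul]
    exact (mul_le_of_le_one_right (abs_nonneg _) (hs ω)).trans (hT ω)
  have hRi : Integrable R P := integrable_of_abs_le hR 1 fun ω => abs1 (hRr ω)
  have hBR : Integrable (B * R) P :=
    integrable_of_abs_le (hBm.mul hR) _ (hmulC hBC fun ω => abs1 (hRr ω))
  have hBg : Integrable (fun ω => B ω * ga ω) P :=
    integrable_of_abs_le (hBm.mul hgam) _ (hmulC hBC fun ω => abs1 (hg _ _))
  -- the noise is conditionally centred given the history, the context and the action
  have hnoise : ∫ ω, B ω * R ω ∂P = ∫ ω, B ω * ga ω ∂P := by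
    have h1 := condExp_mul_of_stronglyMeasurable_left (μ := P) hBH.stronglyMeasurable hBR hRi
    refine (integral_condExp (sup_le (sup_le hH hZ.comap_le) hA.comap_le)
      (f := B * R) (μ := P)).symm.trans (integral_congr_ae ?_)
    filter_upwards [h1, hmean] with ω e1 e2
    rw [e1, Pi.mul_apply, e2]
  have hsq : ∫ ω, W' ω * (fa ω - ga ω) ^ 2 ∂P = ∫ ω, W' ω * v ω ∂P := by
    have := integral_mul_sq_eq H P hH f g hfm hgm hf hg Z hZ hind q hq W' hW'H _ hW'C
    simp only [← hAq] at this
    exact this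
  have hW'i : Integrable W' P := integrable_of_abs_le hW' _ hW'C
  have hvm : Measurable v := hv.mono hH le_rfl
  have hW'v : Integrable (fun ω => W' ω * v ω) P :=
    integrable_of_abs_le (hW'.mul hvm) _ (hmulC hW'C fun ω => abs1 ⟨hv0 ω, hv1 ω⟩)
  have hW'd : Integrable (fun ω => W' ω * (fa ω - ga ω) ^ 2) P :=
    integrable_of_abs_le (hW'.mul ((hfam.sub hgam).pow_const 2)) _
      (hmulC hW'C fun ω => by rw [abs_pow]; exact pow_le_one₀ (abs_nonneg _) (hd1 ω))
  have hWi : Integrable W P := integrable_of_abs_le (hW.mono hH le_rfl) _ hC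
  calc ∫ ω, W ω * Real.exp (-((fa ω - R ω) ^ 2 - (ga ω - R ω) ^ 2) / 8 + v ω / 16) ∂P
      ≤ ∫ ω, (W' ω - 1 / 16 * (W' ω * (fa ω - ga ω) ^ 2)
          + 1 / 4 * (B ω * R ω - B ω * ga ω)) ∂P := by
        refine integral_mono_of_nonneg
          (ae_of_all _ fun ω => mul_nonneg (hW0 ω) (Real.exp_pos _).le)
          ((hW'i.sub (hW'd.const_mul _)).add ((hBR.sub hBg).const_mul _))
          (ae_of_all _ fun ω => ?_)
        have h := mul_le_mul_of_nonneg_left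
          (exp_excess_le (hf (Z ω) (A ω)) (hg (Z ω) (A ω)) (hRr ω)) (hW'0 ω)
        simp only [hB]
        rw [Real.exp_add]
        have e : W ω * (Real.exp (-((fa ω - R ω) ^ 2 - (ga ω - R ω) ^ 2) / 8)
            * Real.exp (v ω / 16))
            = W' ω * Real.exp (-((fa ω - R ω) ^ 2 - (ga ω - R ω) ^ 2) / 8) := by
          simp only [hW'def]; ring
        rw [e]
        refine h.trans (le_of_eq ?_)
        simp only [hfa, hga]; ring
    _ = ∫ ω, (W' ω - 1 / 16 * (W' ω * v ω)) ∂P := by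
        have hBR' : Integrable (fun ω => B ω * R ω) P := hBR
        have e1 : ∫ ω, (B ω * R ω - B ω * ga ω) ∂P = 0 := by
          rw [integral_sub hBR' hBg, hnoise, sub_self]
        have i1 : Integrable (fun ω => W' ω - 1 / 16 * (W' ω * (fa ω - ga ω) ^ 2)) P :=
          hW'i.sub (hW'd.const_mul _)
        have i2 : Integrable (fun ω => 1 / 4 * (B ω * R ω - B ω * ga ω)) P :=
          (hBR'.sub hBg).const_mul _
        rw [integral_add i1 i2, integral_const_mul, e1, integral_sub hW'i (hW'd.const_mul _),
          integral_sub hW'i (hW'v.const_mul _), integral_const_mul, integral_const_mul, hsq]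
        ring
    _ ≤ ∫ ω, W ω ∂P := by
        refine integral_mono (hW'i.sub (hW'v.const_mul _)) hWi fun ω => ?_
        have h1 : 1 - v ω / 16 ≤ Real.exp (-(v ω / 16)) := by
          linarith [Real.add_one_le_exp (-(v ω / 16))]
        have h2 := mul_le_mul_of_nonneg_left h1 (hW'0 ω)
        have h3 : W' ω * Real.exp (-(v ω / 16)) = W ω := by
          simp only [hW'def]
          rw [mul_assoc, ← Real.exp_add, add_neg_cancel, Real.exp_zero, mul_one]
        calc W' ω - 1 / 16 * (W' ω * v ω) = W' ω * (1 - v ω / 16) := by ring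
          _ ≤ _ := h2
          _ = _ := h3

/-! ### The exponential supermartingale -/

lemma histFilt_mono {Ω X : Type*} [MeasurableSpace X]
    (x : ℕ → Ω → X) (a : ℕ → Ω → ℕ) (r : ℕ → Ω → ℝ) {s t : ℕ} (h : s ≤ t) :
    histFilt x a r s ≤ histFilt x a r t :=
  biSup_mono fun _ hi => Finset.Icc_subset_Icc_right h hi

lemma histFilt_le {Ω X : Type*} [mΩ : MeasurableSpace Ω] [MeasurableSpace X]
    {x : ℕ → Ω → X} {a : ℕ → Ω → ℕ} {r : ℕ → Ω → ℝ} (hx : ∀ t, Measurable (x t))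
    (ha : ∀ t, Measurable (a t)) (hr : ∀ t, Measurable (r t)) (t : ℕ) :
    histFilt x a r t ≤ mΩ :=
  iSup₂_le fun i _ => ((hx i).prodMk ((ha i).prodMk (hr i))).comap_le

lemma measurable_histFilt {Ω X : Type*} [MeasurableSpace X]
    (x : ℕ → Ω → X) (a : ℕ → Ω → ℕ) (r : ℕ → Ω → ℝ) {i : ℕ} (hi : 1 ≤ i) :
    Measurable[histFilt x a r i] (fun ω => (x i ω, a i ω, r i ω)) :=
  Measurable.of_comap_le
    (le_iSup₂_of_le (f := fun i (_ : i ∈ Finset.Icc 1 _) =>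
      MeasurableSpace.comap (fun ω => (x i ω, a i ω, r i ω)) inferInstance) i
      (Finset.mem_Icc.2 ⟨hi, le_rfl⟩) le_rfl)

lemma measurable_sqGap {Ω X : Type*} [mX : MeasurableSpace X] (H : MeasurableSpace Ω)
    (Dx : Measure X) [IsProbabilityMeasure Dx]
    (f g : X → ℕ → ℝ) (hfm : ∀ k, Measurable (fun x' => f x' k))
    (hgm : ∀ k, Measurable (fun x' => g x' k))
    (q : Ω → X → ℕ) (hq : Measurable[H.prod mX] (fun z : Ω × X => q z.1 z.2)) :
    Measurable[H] fun ω => sqGap Dx f g (q ω) := by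
  have hp : Measurable fun z : Ω × X => (z.2, q z.1 z.2) := measurable_snd.prodMk hq
  have h : Measurable fun z : Ω × X => (f z.2 (q z.1 z.2) - g z.2 (q z.1 z.2)) ^ 2 :=
    (((measurable_uncurry_of_countable hfm).comp hp).sub
      ((measurable_uncurry_of_countable hgm).comp hp)).pow_const 2
  exact (h.stronglyMeasurable.integral_prod_right' (ν := Dx)).measurable

/-- The log of the exponential supermartingale attached to the competitor `f` of `g`: excess
losses, compensated by half of their accumulated drift. -/
noncomputable def logMart {Ω X : Type*} [MeasurableSpace X] (Dx : Measure X)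
    (f g : X → ℕ → ℝ) (x : ℕ → Ω → X) (a : ℕ → Ω → ℕ) (r : ℕ → Ω → ℝ) (p : ℕ → Ω → X → ℕ)
    (n : ℕ) (ω : Ω) : ℝ :=
  ∑ i ∈ Finset.Icc 1 n, (-((f (x i ω) (a i ω) - r i ω) ^ 2 - (g (x i ω) (a i ω) - r i ω) ^ 2) / 8
    + sqGap Dx f g (p i ω) / 16)

lemma measurable_logMart {Ω X : Type*} [MeasurableSpace X] (Dx : Measure X)
    [IsProbabilityMeasure Dx]
    (f g : X → ℕ → ℝ) (hfm : ∀ k, Measurable (fun x' => f x' k))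
    (hgm : ∀ k, Measurable (fun x' => g x' k))
    (x : ℕ → Ω → X) (a : ℕ → Ω → ℕ) (r : ℕ → Ω → ℝ) (p : ℕ → Ω → X → ℕ)
    (hp_meas : ∀ t, 1 ≤ t →
      Measurable[(histFilt x a r (t - 1)).prod inferInstance] (fun q : Ω × X => p t q.1 q.2))
    (n : ℕ) : Measurable[histFilt x a r n] (logMart Dx f g x a r p n) := by
  unfold logMart
  refine @Finset.measurable_fun_sum ℝ ℕ Ω _ _ _ (histFilt x a r n) _ _ fun i hi => ?_
  obtain ⟨h1, hn⟩ := Finset.mem_Icc.1 hi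
  have hm := (measurable_histFilt x a r h1).mono (histFilt_mono x a r hn) le_rfl
  have hv := (measurable_sqGap _ Dx f g hfm hgm (p i) (hp_meas i h1)).mono
    (histFilt_mono x a r (show i - 1 ≤ n by omega)) le_rfl
  have hxa : Measurable fun z : X × ℕ × ℝ => (z.1, z.2.1) := by fun_prop
  have hF := (measurable_uncurry_of_countable hfm).comp hxa
  have hG := (measurable_uncurry_of_countable hgm).comp hxa
  have hr : Measurable fun z : X × ℕ × ℝ => z.2.2 := by fun_prop
  have hE : Measurable fun z : X × ℕ × ℝ =>
      -((f z.1 z.2.1 - z.2.2) ^ 2 - (g z.1 z.2.1 - z.2.2) ^ 2) / 8 :=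
    ((((hF.sub hr).pow_const 2).sub ((hG.sub hr).pow_const 2)).neg).div_const 8
  exact (hE.comp hm).add (hv.div_const 16)

lemma logMart_le {Ω X : Type*} [MeasurableSpace X] (Dx : Measure X)
    [IsProbabilityMeasure Dx] (f g : X → ℕ → ℝ)
    (hf : ∀ x' k, f x' k ∈ Set.Icc (0 : ℝ) 1) (hg : ∀ x' k, g x' k ∈ Set.Icc (0 : ℝ) 1)
    (x : ℕ → Ω → X) (a : ℕ → Ω → ℕ) (r : ℕ → Ω → ℝ) (hr : ∀ t ω, r t ω ∈ Set.Icc (0 : ℝ) 1)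
    (p : ℕ → Ω → X → ℕ) (n : ℕ) (ω : Ω) : logMart Dx f g x a r p n ω ≤ n := by
  unfold logMart
  have : ∀ i ∈ Finset.Icc 1 n,
      (-((f (x i ω) (a i ω) - r i ω) ^ 2 - (g (x i ω) (a i ω) - r i ω) ^ 2) / 8
        + sqGap Dx f g (p i ω) / 16) ≤ 1 := fun i _ => by
    have h1 := sqGap_le_one Dx f g (p i ω) hf hg
    have h2 := (sq_le_one_iff_abs_le_one _).2
      (abs_sub_le_one_of_mem_Icc (hg (x i ω) (a i ω)) (hr i ω))
    have h3 := sq_nonneg (f (x i ω) (a i ω) - r i ω)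
    linarith
  simpa using Finset.sum_le_card_nsmul _ _ _ this

lemma integral_exp_logMart_le {Ω X : Type*} [MeasurableSpace Ω] [MeasurableSpace X]
    (P : Measure Ω) [IsProbabilityMeasure P]
    (Dx : Measure X) [IsProbabilityMeasure Dx]
    (f g : X → ℕ → ℝ) (hfm : ∀ k, Measurable (fun x' => f x' k))
    (hgm : ∀ k, Measurable (fun x' => g x' k))
    (hf : ∀ x' k, f x' k ∈ Set.Icc (0 : ℝ) 1) (hg : ∀ x' k, g x' k ∈ Set.Icc (0 : ℝ) 1)
    (x : ℕ → Ω → X) (a : ℕ → Ω → ℕ) (r : ℕ → Ω → ℝ)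
    (hx_meas : ∀ t, Measurable (x t))
    (ha_meas : ∀ t, Measurable (a t))
    (hr_meas : ∀ t, Measurable (r t))
    (hr_range : ∀ t ω, r t ω ∈ Set.Icc (0 : ℝ) 1)
    (hx_law : ∀ t, 1 ≤ t → P.map (x t) = Dx)
    (hx_indep : ∀ t, 1 ≤ t →
      Indep (MeasurableSpace.comap (x t) inferInstance) (histFilt x a r (t - 1)) P)
    (hmean : ∀ t, 1 ≤ t →
      P[r t | histFilt x a r (t - 1) ⊔ MeasurableSpace.comap (x t) inferInstance
          ⊔ MeasurableSpace.comap (a t) inferInstance]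
        =ᵐ[P] fun ω => g (x t ω) (a t ω))
    (p : ℕ → Ω → X → ℕ)
    (hp_meas : ∀ t, 1 ≤ t →
      Measurable[(histFilt x a r (t - 1)).prod inferInstance]
        (fun q : Ω × X => p t q.1 q.2))
    (hplay : ∀ t ω, 1 ≤ t → a t ω = p t ω (x t ω)) (n : ℕ) :
    ∫ ω, Real.exp (logMart Dx f g x a r p n ω) ∂P ≤ 1 := by
  induction n with
  | zero => simp [logMart]
  | succ n ih =>
    have h1 : 1 ≤ n + 1 := by omega
    refine le_trans ?_ ih
    have hlaw := hx_law (n + 1) h1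
    have hind := hx_indep (n + 1) h1
    have hp := hp_meas (n + 1) h1
    have hm := hmean (n + 1) h1
    rw [Nat.add_sub_cancel] at hind hp hm
    have hv := measurable_sqGap _ Dx f g hfm hgm (p (n + 1)) hp
    have hstep := integral_step_le (histFilt x a r n) P (histFilt_le hx_meas ha_meas hr_meas n)
      f g hfm hgm hf hg (x (n + 1)) (hx_meas _) hind (p (n + 1)) hp
      (a (n + 1)) (ha_meas _) (fun ω => hplay _ ω h1) (r (n + 1)) (hr_meas _)
      (hr_range _) hm (by rw [hlaw]; exact hv)
      (fun ω => Real.exp (logMart Dx f g x a r p n ω))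
      (Real.measurable_exp.comp (measurable_logMart Dx f g hfm hgm x a r p hp_meas n))
      (Real.exp n)
      (fun ω => by
        rw [abs_of_pos (Real.exp_pos _)]
        exact Real.exp_le_exp.2 (logMart_le Dx f g hf hg x a r hr_range p n ω))
      (fun ω => (Real.exp_pos _).le)
    rw [hlaw] at hstep
    refine le_trans (le_of_eq ?_) hstep
    refine integral_congr_ae (ae_of_all _ fun ω => ?_)
    simp only [logMart]
    rw [← Real.exp_add, Finset.sum_Icc_succ_top h1]

/-! ### Union bound and the square trick -/

/-- Telescoping bound for the union over rounds `t = s + 2 ≥ 2`. -/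
lemma sum_inv_cube_le (n : ℕ) :
    ∑ s ∈ Finset.range n, 1 / ((s : ℝ) + 2) ^ 3 ≤ 1 - 1 / ((n : ℝ) + 1) := by
  induction n with
  | zero => simp
  | succ n ih =>
    rw [Finset.sum_range_succ]
    have hn : (0 : ℝ) ≤ n := n.cast_nonneg
    have h : 1 / ((n : ℝ) + 2) ^ 3 ≤ 1 / ((n : ℝ) + 1) - 1 / ((n : ℝ) + 2) := by
      rw [div_sub_div _ _ (by positivity) (by positivity), div_le_div_iff₀ (by positivity)
        (by positivity)]
      nlinarith [mul_nonneg hn hn, mul_nonneg hn (mul_nonneg hn hn)]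
    push_cast
    have e : (n : ℝ) + 1 + 1 = n + 2 := by ring
    rw [e]
    linarith

/-- The square trick. If the accumulated squared gap along the played policies is at most
`V`, the pointwise inequality `|D| ≤ b/N + N D²/(4b)`, with `N` the number of rounds whose policy
agrees with `π` at the context, controls the mean gap along any policy `π`. -/
lemma abs_integral_gap_le {X : Type*} [MeasurableSpace X]
    (Dx : Measure X) [IsProbabilityMeasure Dx]
    (f g : X → ℕ → ℝ) (hfm : ∀ k, Measurable (fun x' => f x' k))
    (hgm : ∀ k, Measurable (fun x' => g x' k))
    (hf : ∀ x' k, f x' k ∈ Set.Icc (0 : ℝ) 1) (hg : ∀ x' k, g x' k ∈ Set.Icc (0 : ℝ) 1)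
    (S : Finset ℕ) (q : ℕ → X → ℕ) (hq : ∀ i ∈ S, Measurable (q i))
    (π : X → ℕ) (hπ : Measurable π) (hN : ∀ x', ∃ i ∈ S, π x' = q i x')
    (b V c : ℝ) (hb : 0 < b) (hV : ∑ i ∈ S, sqGap Dx f g (q i) ≤ V) (hc : V ≤ 4 * b * c) :
    |(∫ x', f x' (π x') ∂Dx) - ∫ x', g x' (π x') ∂Dx|
      ≤ (∫ x', b / ((S.filter (fun i => π x' = q i x')).card : ℝ) ∂Dx) + c := by
  set N : X → ℝ := fun x' => ((S.filter (fun i => π x' = q i x')).card : ℝ) with hNdef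
  have hNsum : ∀ x', N x' = ∑ i ∈ S, if π x' = q i x' then (1 : ℝ) else 0 := fun x' => by
    simp [hNdef]
  have hN1 : ∀ x', 1 ≤ N x' := fun x' => by
    obtain ⟨i, hi, e⟩ := hN x'
    have : 0 < (S.filter (fun i => π x' = q i x')).card :=
      Finset.card_pos.2 ⟨i, Finset.mem_filter.2 ⟨hi, e⟩⟩
    simp only [hNdef]
    exact_mod_cast this
  have hev : ∀ {h : X → ℕ → ℝ} (_ : ∀ k, Measurable (fun x' => h x' k)) {u : X → ℕ},
      Measurable u → Measurable fun x' => h x' (u x') := fun hh _ hu =>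
    (measurable_uncurry_of_countable hh).comp (measurable_id.prodMk hu)
  have hfπ := hev hfm hπ
  have hgπ := hev hgm hπ
  set D : X → ℝ := fun x' => f x' (π x') - g x' (π x') with hD
  have hDm : Measurable D := hfπ.sub hgπ
  have hD1 : ∀ x', |D x'| ≤ 1 := fun x' => abs_sub_le_one_of_mem_Icc (hf _ _) (hg _ _)
  have hD2 : ∀ x', (D x') ^ 2 ≤ 1 := fun x' => (sq_le_one_iff_abs_le_one _).2 (hD1 x')
  have hset : ∀ i ∈ S, MeasurableSet {x' | π x' = q i x'} := fun i hi =>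
    measurableSet_eq_fun hπ (hq i hi)
  have hNm : Measurable N := by
    have : N = fun x' => ∑ i ∈ S, if π x' = q i x' then (1 : ℝ) else 0 := funext hNsum
    rw [this]
    exact Finset.measurable_fun_sum _ fun i hi =>
      Measurable.ite (hset i hi) measurable_const measurable_const
  have hNS : ∀ x', N x' ≤ S.card := fun x' => by
    simp only [hNdef]; exact_mod_cast Finset.card_filter_le _ _
  have hInv : Integrable (fun x' => b / N x') Dx :=
    integrable_of_abs_le (measurable_const.div hNm) b fun x' => by
      have := hN1 x'
      rw [abs_of_nonneg (by positivity)]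
      exact div_le_self hb.le this
  have hND : Integrable (fun x' => N x' * (D x') ^ 2) Dx :=
    integrable_of_abs_le (hNm.mul (hDm.pow_const 2)) S.card fun x' => by
      have := hN1 x'
      rw [abs_of_nonneg (by positivity)]
      exact (mul_le_of_le_one_right (by positivity) (hD2 x')).trans (hNS x')
  have hgap : ∀ i ∈ S, Integrable (fun x' => (f x' (q i x') - g x' (q i x')) ^ 2) Dx :=
    fun i hi => integrable_of_abs_le
      (((hev hfm (hq i hi)).sub (hev hgm (hq i hi))).pow_const 2) 1 fun x' => by
      rw [abs_pow]
      exact pow_le_one₀ (abs_nonneg _) (abs_sub_le_one_of_mem_Icc (hf _ _) (hg _ _))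
  -- only the rounds whose policy agrees with `π` at `x'` contribute, and there the gaps coincide
  have hNDle : ∫ x', N x' * (D x') ^ 2 ∂Dx ≤ V := by
    refine le_trans ?_ hV
    unfold sqGap
    rw [← integral_finsetSum _ hgap]
    refine integral_mono hND (integrable_finsetSum _ hgap) fun x' => ?_
    simp only
    rw [hNsum, Finset.sum_mul]
    refine Finset.sum_le_sum fun i _ => ?_
    split_ifs with h
    · simp only [hD, h, one_mul, le_refl]
    · rw [zero_mul]; positivity
  have hpt : ∀ x', |D x'| ≤ b / N x' + 1 / (4 * b) * (N x' * (D x') ^ 2) := fun x' => by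
    have hN0 : 0 < N x' := lt_of_lt_of_le one_pos (hN1 x')
    have e : b / N x' + 1 / (4 * b) * (N x' * (D x') ^ 2) - |D x'|
        = (2 * b - N x' * |D x'|) ^ 2 / (4 * b * N x') := by
      rw [← sq_abs (D x')]
      field_simp
      ring
    have : 0 ≤ (2 * b - N x' * |D x'|) ^ 2 / (4 * b * N x') := by positivity
    linarith
  have hfi : Integrable (fun x' => f x' (π x')) Dx := integrable_of_abs_le hfπ 1 fun x' => by
    rw [abs_of_nonneg (hf _ _).1]; exact (hf _ _).2
  have hgi : Integrable (fun x' => g x' (π x')) Dx := integrable_of_abs_le hgπ 1 fun x' => by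
    rw [abs_of_nonneg (hg _ _).1]; exact (hg _ _).2
  rw [← integral_sub hfi hgi]
  calc |∫ x', D x' ∂Dx| ≤ ∫ x', |D x'| ∂Dx := abs_integral_le_integral_abs
    _ ≤ ∫ x', (b / N x' + 1 / (4 * b) * (N x' * (D x') ^ 2)) ∂Dx :=
        integral_mono (hfi.sub hgi).abs (hInv.add (hND.const_mul _)) hpt
    _ = (∫ x', b / N x' ∂Dx) + 1 / (4 * b) * ∫ x', N x' * (D x') ^ 2 ∂Dx := by
        rw [integral_add hInv (hND.const_mul _), integral_const_mul]
    _ ≤ (∫ x', b / N x' ∂Dx) + c := by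
        have : 1 / (4 * b) * ∫ x', N x' * (D x') ^ 2 ∂Dx ≤ c := by
          rw [one_div, inv_mul_le_iff₀ (by positivity)]
          exact hNDle.trans hc
        linarith

/-! ### The uniform confidence bound -/

/-- **The "square trick" relaxation of the policy confidence bound.**
Consider an admissible non-randomized contextual bandit algorithm that at each round `t`
selects a policy `π_t` measurably from the history `H_{t-1}` and plays `a_t = π_t(x_t)`,
and plays each of the `K` actions once during the first `K` rounds (`π_t ≡ t` for `t ≤ K`).
Fix `δ ∈ (0,1)` and set `β_t = √(17 t log(2|F| t³/δ) / K)`.  Then with probability at least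
`1 - δ/2`, simultaneously for all `t > K` and all policies `π : X → {1,...,K}`:
`|E_x[f̂_t(x, π(x))] - E_x[f*(x, π(x))]|
   ≤ E_x[β_t / ∑_{i=1}^{t-1} 1{π(x) = π_i(x)}] + K β_t / t`. -/
theorem stmt_4
    {Ω X : Type*} [MeasurableSpace Ω] [MeasurableSpace X]
    (P : Measure Ω) [IsProbabilityMeasure P]
    (Dx : Measure X) [IsProbabilityMeasure Dx]
    (K : ℕ) (hK : 1 ≤ K)
    -- finite function class, realizability
    (F : Finset (X → ℕ → ℝ))
    (hFmeas : ∀ f ∈ F, ∀ k, Measurable (fun x' => f x' k))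
    (hFrange : ∀ f ∈ F, ∀ x' k, f x' k ∈ Set.Icc (0 : ℝ) 1)
    (fstar : X → ℕ → ℝ) (hfstar : fstar ∈ F)
    -- the stochastic processes of contexts, actions and observed rewards
    (x : ℕ → Ω → X) (a : ℕ → Ω → ℕ) (r : ℕ → Ω → ℝ)
    (hx_meas : ∀ t, Measurable (x t))
    (ha_meas : ∀ t, Measurable (a t))
    (hr_meas : ∀ t, Measurable (r t))
    (hr_range : ∀ t ω, r t ω ∈ Set.Icc (0 : ℝ) 1)
    -- contexts are i.i.d. with law `Dx`, each independent of the past history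
    (hx_law : ∀ t, 1 ≤ t → P.map (x t) = Dx)
    (hx_indep : ∀ t, 1 ≤ t →
      Indep (MeasurableSpace.comap (x t) inferInstance) (histFilt x a r (t - 1)) P)
    -- realizability
    (hmean : ∀ t, 1 ≤ t →
      P[r t | histFilt x a r (t - 1) ⊔ MeasurableSpace.comap (x t) inferInstance
          ⊔ MeasurableSpace.comap (a t) inferInstance]
        =ᵐ[P] fun ω => fstar (x t ω) (a t ω))
    -- non-randomized algorithm: the policy `p t` is a jointly measurable function of the
    -- history `H_{t-1}` and of the context, and the played action is `a_t = π_t(x_t)`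
    (p : ℕ → Ω → X → ℕ)
    (hp_meas : ∀ t, 1 ≤ t →
      Measurable[(histFilt x a r (t - 1)).prod inferInstance]
        (fun q : Ω × X => p t q.1 q.2))
    (hp_range : ∀ t ω x', 1 ≤ t → p t ω x' ∈ Finset.Icc 1 K)
    (hp_init : ∀ t ω x', 1 ≤ t → t ≤ K → p t ω x' = t)
    (hplay : ∀ t ω, 1 ≤ t → a t ω = p t ω (x t ω))
    -- least squares oracle
    (fhat : ℕ → Ω → (X → ℕ → ℝ))
    (hfhat_mem : ∀ t ω, fhat t ω ∈ F)
    (hfhat_ls : ∀ t ω, ∀ f ∈ F,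
      ∑ i ∈ Finset.Icc 1 (t - 1), (fhat t ω (x i ω) (a i ω) - r i ω) ^ 2
        ≤ ∑ i ∈ Finset.Icc 1 (t - 1), (f (x i ω) (a i ω) - r i ω) ^ 2)
    (δ : ℝ) (hδ : δ ∈ Set.Ioo (0 : ℝ) 1)
    (β : ℕ → ℝ)
    (hβ : ∀ t : ℕ, β t = Real.sqrt (17 * t * Real.log (2 * F.card * t ^ 3 / δ) / K)) :
    ENNReal.ofReal (1 - δ / 2) ≤
      P {ω | ∀ t : ℕ, K < t → ∀ π : X → ℕ, Measurable π →
        (∀ x', π x' ∈ Finset.Icc 1 K) →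
        |(∫ x', fhat t ω x' (π x') ∂Dx) - ∫ x', fstar x' (π x') ∂Dx|
          ≤ (∫ x', β t /
                (((Finset.Icc 1 (t - 1)).filter (fun i => π x' = p i ω x')).card : ℝ) ∂Dx)
            + K * β t / t} := by
  classical
  obtain ⟨hδ0, hδ1⟩ := hδ
  have hFpos : 0 < F.card := Finset.card_pos.2 ⟨_, hfstar⟩
  have hF1 : (1 : ℝ) ≤ F.card := by exact_mod_cast hFpos
  set U : ℕ → ℝ := fun t => 2 * F.card * t ^ 3 / δ with hU
  have hUpos : ∀ t : ℕ, 1 ≤ t → 1 < U t := fun t ht => by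
    have ht' : (1 : ℝ) ≤ t := by exact_mod_cast ht
    have h3 : (1 : ℝ) ≤ (t : ℝ) ^ 3 := one_le_pow₀ ht'
    simp only [hU]
    rw [lt_div_iff₀ hδ0]
    nlinarith [mul_le_mul hF1 h3 zero_le_one (by linarith)]
  set M : (X → ℕ → ℝ) → ℕ → Ω → ℝ := fun f n => logMart Dx f fstar x a r p n with hM
  have hMm : ∀ f ∈ F, ∀ n, Measurable (M f n) := fun f hf n =>
    (measurable_logMart Dx f fstar (hFmeas f hf) (hFmeas _ hfstar) x a r p hp_meas n).mono
      (histFilt_le hx_meas ha_meas hr_meas n) le_rfl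
  -- the exceptional event: some supermartingale exceeds its threshold at a round `t = s + 2`
  set Bad : ℕ → Set Ω := fun s => ⋃ f ∈ F, {ω | U (s + 2) ≤ Real.exp (M f (s + 1) ω)} with hBad
  have hBadm : ∀ s, MeasurableSet (Bad s) := fun s =>
    Finset.measurableSet_biUnion _ fun f hf =>
      measurableSet_le measurable_const (Real.measurable_exp.comp (hMm f hf _))
  have hone : ∀ s, ∀ f ∈ F, P.real {ω | U (s + 2) ≤ Real.exp (M f (s + 1) ω)}
      ≤ 1 / U (s + 2) := fun s f hf => by
    have hint : Integrable (fun ω => Real.exp (M f (s + 1) ω)) P :=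
      integrable_of_abs_le (Real.measurable_exp.comp (hMm f hf _)) (Real.exp (s + 1 : ℕ))
        fun ω => by
          rw [abs_of_pos (Real.exp_pos _)]
          exact Real.exp_le_exp.2 (logMart_le Dx f fstar (hFrange f hf) (hFrange _ hfstar)
            x a r hr_range p _ ω)
    have h1 := mul_meas_ge_le_integral_of_nonneg (μ := P)
      (ae_of_all _ fun ω => (Real.exp_pos (M f (s + 1) ω)).le) hint (U (s + 2))
    have h2 := integral_exp_logMart_le P Dx f fstar (hFmeas f hf) (hFmeas _ hfstar)
      (hFrange f hf) (hFrange _ hfstar) x a r hx_meas ha_meas hr_meas hr_range hx_law hx_indep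
      hmean p hp_meas hplay (s + 1)
    have hU0 := hUpos (s + 2) (by omega)
    rw [le_div_iff₀ (by linarith), mul_comm]
    exact h1.trans h2
  have hBadP : ∀ s, P (Bad s) ≤ ENNReal.ofReal (δ / 2 * (1 / ((s : ℝ) + 2) ^ 3)) := fun s => by
    rw [← ofReal_measureReal (measure_ne_top P _)]
    refine ENNReal.ofReal_le_ofReal ?_
    refine (measureReal_biUnion_finset_le _ _).trans ((Finset.sum_le_sum (hone s)).trans ?_)
    rw [Finset.sum_const, nsmul_eq_mul]
    simp only [hU]
    push_cast
    refine le_of_eq ?_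
    field_simp
  have hUnion : P (⋃ s, Bad s) ≤ ENNReal.ofReal (δ / 2) := by
    refine (measure_iUnion_le _).trans (ENNReal.tsum_le_of_sum_range_le fun n => ?_)
    refine (Finset.sum_le_sum fun s _ => hBadP s).trans ?_
    rw [← ENNReal.ofReal_sum_of_nonneg fun s _ => by positivity, ← Finset.mul_sum]
    refine ENNReal.ofReal_le_ofReal (mul_le_of_le_one_right (by linarith) ?_)
    have : (0 : ℝ) ≤ 1 / ((n : ℝ) + 1) := by positivity
    linarith [sum_inv_cube_le n]
  have hgood : ENNReal.ofReal (1 - δ / 2) ≤ P (⋃ s, Bad s)ᶜ := by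
    rw [prob_compl_eq_one_sub (MeasurableSet.iUnion hBadm),
      ENNReal.ofReal_sub _ (by linarith), ENNReal.ofReal_one]
    exact tsub_le_tsub_left hUnion _
  refine hgood.trans (measure_mono fun ω hω => ?_)
  intro t ht π hπ hπK
  obtain ⟨s, rfl⟩ : ∃ s, t = s + 2 := ⟨t - 2, by omega⟩
  have hmem := hfhat_mem (s + 2) ω
  set f := fhat (s + 2) ω with hfdef
  have hlt : M f (s + 1) ω < Real.log (U (s + 2)) := by
    have hU0 := hUpos (s + 2) (by omega)
    rw [Real.lt_log_iff_exp_lt (by linarith)]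
    by_contra hcon
    exact hω (Set.mem_iUnion.2 ⟨s, Set.mem_biUnion hmem (not_lt.1 hcon)⟩)
  have hls := hfhat_ls (s + 2) ω fstar hfstar
  have hs1 : s + 2 - 1 = s + 1 := rfl
  rw [hs1] at hls ⊢
  set L := Real.log (U (s + 2)) with hL
  have hL0 : 0 < L := Real.log_pos (hUpos (s + 2) (by omega))
  have hV : ∑ i ∈ Finset.Icc 1 (s + 1), sqGap Dx f fstar (p i ω) ≤ 16 * L := by
    simp only [hM, logMart] at hlt
    rw [Finset.sum_add_distrib, ← Finset.sum_div, ← Finset.sum_div, Finset.sum_neg_distrib,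
      Finset.sum_sub_distrib] at hlt
    linarith
  have hK0 : (0 : ℝ) < K := by exact_mod_cast hK
  have hT0 : (0 : ℝ) < ((s + 2 : ℕ) : ℝ) := by positivity
  have hβ' : β (s + 2) = Real.sqrt (17 * (s + 2 : ℕ) * L / K) := hβ (s + 2)
  have hβ0 : 0 < β (s + 2) := by rw [hβ']; exact Real.sqrt_pos.2 (by positivity)
  have hβsq : β (s + 2) * β (s + 2) = 17 * (s + 2 : ℕ) * L / K := by
    rw [hβ']; exact Real.mul_self_sqrt (by positivity)
  refine abs_integral_gap_le Dx f fstar (hFmeas f hmem) (hFmeas _ hfstar) (hFrange f hmem)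
    (hFrange _ hfstar) (Finset.Icc 1 (s + 1)) (fun i => p i ω) (fun i hi => ?_) π hπ
    (fun x' => ?_) (β (s + 2)) (16 * L) _ hβ0 hV ?_
  · have h := hp_meas i (Finset.mem_Icc.1 hi).1
    exact h.comp measurable_prodMk_left
  · -- each action was played once in the initial rounds
    obtain ⟨h1, h2⟩ := Finset.mem_Icc.1 (hπK x')
    exact ⟨π x', Finset.mem_Icc.2 ⟨h1, by omega⟩, (hp_init _ ω x' h1 h2).symm⟩
  · -- `4 β² K / t = 68 L`, so the constant `17` in `β` leaves slack over the required `16 L`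
    have : 4 * β (s + 2) * (K * β (s + 2) / (s + 2 : ℕ)) = 68 * L := by
      calc _ = 4 * K * (β (s + 2) * β (s + 2)) / (s + 2 : ℕ) := by ring
        _ = _ := by rw [hβsq]; field_simp; norm_num
    rw [this]
    linarith
end

section
/- Fix t ≥ 2 and δ_t ∈ (0, 1/e²). For an arbitrary (possibly randomized) contextual bandit algorithm, with probability at least 1 − log₂(t−1)·δ_t, simultaneously for all f ∈ F: Σ_{i=1}^{t−1} E[ (f(x_i,a_i) − f*(x_i,a_i))² | H_{i−1} ] ≤ 68 log(|F|/δ_t) + 2 Σ_{i=1}^{t−1} Y_{f,i}, where Y_{f,i} := (f(x_i,a_i) − r_i)² − (f*(x_i,a_i) − r_i)² and E[· | H_{i−1}] denotes conditional expectation over (x_i, a_i) given the history H_{i−1}. -/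
/-!
The bound follows from an exponential supermartingale.  Fix `f ∈ F` and write
`q_i = (f(x_i,a_i) - f*(x_i,a_i))²` and `v_i = E[q_i | H_{i-1}]`.  Realizability gives
`E[Y_i | H_{i-1}] = v_i` (`condExp_excess_loss`), and boundedness gives `|Y_i| ≤ 1` and
`Y_i² ≤ 4 q_i`.  As `exp z ≤ 1 + z + z²` for `|z| ≤ 1`,
`E[exp(-Y_i/8) | H_{i-1}] ≤ 1 - v_i/8 + 4 v_i/64 = 1 - v_i/16 ≤ exp(-v_i/16)`,
so `exp(∑ (v_i/16 - Y_i/8))` has expectation at most one (`integral_exp_step` is the one-step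
estimate, `integral_exp_sum_le_one` the iterated one).  Markov's inequality and a union bound over
`F` show that, with probability at least `1 - δ`, `∑ v_i ≤ 16 log(|F|/δ) + 2 ∑ Y_i` for all
`f ∈ F` at once.

The fixed value `λ = 1/8` makes the variance term absorbable in the mean, so no peeling over the
size of the variance is needed and the failure probability is `δ`.  This is at most `log₂(t-1) δ`
as soon as `t ≥ 3`.  For `t = 2` the claimed probability is `1`, and the inequality holds almost
surely because `68 log(|F|/δ) ≥ 136` while the remaining terms are bounded by `1` and `2`.
-/

open MeasureTheory ProbabilityTheory

/-- The conditional mean of the excess squared loss is the conditional mean squared distance: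
if `s = E[r | m₂]`, then `E[(u - r)² - (s - r)² | m₂] = (u - s)²`, and the tower property passes
to `m₁ ≤ m₂`. -/
lemma condExp_excess_loss {Ω : Type*} {m1 m2 m0 : MeasurableSpace Ω} {P : Measure Ω}
    [IsProbabilityMeasure P] (h12 : m1 ≤ m2) (h20 : m2 ≤ m0) {u s r : Ω → ℝ}
    (hu : Measurable[m2] u) (hs : Measurable[m2] s) (hr : Measurable r)
    (hu1 : ∀ ω, u ω ∈ Set.Icc (0 : ℝ) 1) (hs1 : ∀ ω, s ω ∈ Set.Icc (0 : ℝ) 1)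
    (hr1 : ∀ ω, r ω ∈ Set.Icc (0 : ℝ) 1) (hmean : P[r | m2] =ᵐ[P] s) :
    P[(fun ω => (u ω - r ω) ^ 2 - (s ω - r ω) ^ 2) | m1]
      =ᵐ[P] P[(fun ω => (u ω - s ω) ^ 2) | m1] := by
  -- the excess loss is affine in `r` with `m₂`-measurable coefficients `A` and `B`
  let A : Ω → ℝ := fun ω => u ω ^ 2 - s ω ^ 2
  let B : Ω → ℝ := fun ω => 2 * (s ω - u ω)
  have hA : Measurable[m2] A := by
    exact (hu.pow_const 2).sub (hs.pow_const 2)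
  have hB : Measurable[m2] B := (hs.sub hu).const_mul 2
  have hAi : Integrable A P := by
    refine Integrable.of_bound (C := 1) (hA.mono h20 le_rfl).aestronglyMeasurable
      (Filter.Eventually.of_forall fun ω => ?_)
    obtain ⟨h1, h2⟩ := hu1 ω
    obtain ⟨h3, h4⟩ := hs1 ω
    rw [Real.norm_eq_abs, abs_le]
    constructor <;> simp only [A] <;> nlinarith
  have hri : Integrable r P := by
    refine Integrable.of_bound (C := 1) hr.aestronglyMeasurable
      (Filter.Eventually.of_forall fun ω => ?_)
    rw [Real.norm_eq_abs, abs_le]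
    constructor <;> linarith [(hr1 ω).1, (hr1 ω).2]
  have hBri : Integrable (B * r) P := by
    refine hri.bdd_mul (c := 2) (hB.mono h20 le_rfl).aestronglyMeasurable
      (Filter.Eventually.of_forall fun ω => ?_)
    obtain ⟨h1, h2⟩ := hu1 ω
    obtain ⟨h3, h4⟩ := hs1 ω
    rw [Real.norm_eq_abs, abs_le]
    constructor <;> simp only [B] <;> linarith
  have hY : (fun ω => (u ω - r ω) ^ 2 - (s ω - r ω) ^ 2) = A + B * r := by
    funext ω
    simp only [A, B, Pi.add_apply, Pi.mul_apply]
    ring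
  have h2 : P[A + B * r | m2] =ᵐ[P] fun ω => (u ω - s ω) ^ 2 := by
    have e1 := condExp_add hAi hBri m2
    have e2 := condExp_of_stronglyMeasurable h20 hA.stronglyMeasurable hAi
    have e3 := condExp_mul_of_stronglyMeasurable_left hB.stronglyMeasurable hBri hri
    filter_upwards [e1, e3, hmean] with ω w1 w3 w4
    rw [w1, Pi.add_apply, e2, w3, Pi.mul_apply, w4]
    simp only [A, B]
    ring
  rw [hY]
  exact (condExp_condExp_of_le h12 h20).symm.trans (condExp_congr_ae h2)

/-- A conditional expectation of a `[0,1]`-valued function lies in `[0,1]`. -/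
lemma condExp_mem_unitInterval {Ω : Type*} {m m0 : MeasurableSpace Ω} {P : Measure Ω}
    [IsProbabilityMeasure P] (hm : m ≤ m0) {q : Ω → ℝ} (hq : Measurable q)
    (hq1 : ∀ ω, q ω ∈ Set.Icc (0 : ℝ) 1) :
    ∀ᵐ ω ∂P, (P[q | m]) ω ∈ Set.Icc (0 : ℝ) 1 := by
  have hqi : Integrable q P := by
    refine Integrable.of_bound (C := 1) hq.aestronglyMeasurable
      (Filter.Eventually.of_forall fun ω => ?_)
    rw [Real.norm_eq_abs, abs_le]
    constructor <;> linarith [(hq1 ω).1, (hq1 ω).2]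
  have h0 : 0 ≤ᵐ[P] P[q | m] := condExp_nonneg (Filter.Eventually.of_forall fun ω => (hq1 ω).1)
  have h1 : P[q | m] ≤ᵐ[P] P[(fun _ => (1 : ℝ)) | m] :=
    condExp_mono hqi (integrable_const _) (Filter.Eventually.of_forall fun ω => (hq1 ω).2)
  rw [condExp_const hm] at h1
  filter_upwards [h0, h1] with ω w0 w1 using ⟨w0, w1⟩

/-- The one-step supermartingale estimate: with `v = E[q | m] = E[Y | m]` and `Y² ≤ 4q`, the factor
`exp(v/16 - Y/8)` has conditional expectation at most one, here tested against a bounded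
nonnegative `m`-measurable weight `G`. -/
lemma integral_exp_step {Ω : Type*} {m m0 : MeasurableSpace Ω} {P : Measure Ω}
    [IsProbabilityMeasure P] (hm : m ≤ m0) {G Y q : Ω → ℝ} {C : ℝ}
    (hG : StronglyMeasurable[m] G) (hG0 : ∀ ω, 0 ≤ G ω) (hGC : ∀ᵐ ω ∂P, G ω ≤ C)
    (hY : Measurable Y) (hq : Measurable q)
    (hY1 : ∀ ω, |Y ω| ≤ 1) (hq1 : ∀ ω, q ω ∈ Set.Icc (0 : ℝ) 1)
    (hYq : ∀ ω, Y ω ^ 2 ≤ 4 * q ω) (hmean : P[Y | m] =ᵐ[P] P[q | m]) :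
    ∫ ω, G ω * Real.exp ((P[q | m]) ω / 16 - Y ω / 8) ∂P ≤ ∫ ω, G ω ∂P := by
  set v := P[q | m] with hv
  have hvm : StronglyMeasurable[m] v := stronglyMeasurable_condExp
  have hv01 := condExp_mem_unitInterval (P := P) hm hq hq1
  have hYi : Integrable Y P := Integrable.of_bound (C := 1) hY.aestronglyMeasurable
      (Filter.Eventually.of_forall hY1)
  have hqi : Integrable q P := by
    refine Integrable.of_bound (C := 1) hq.aestronglyMeasurable
      (Filter.Eventually.of_forall fun ω => ?_)
    rw [Real.norm_eq_abs, abs_le]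
    constructor <;> linarith [(hq1 ω).1, (hq1 ω).2]
  -- the predictable weight `W`, and the second-order majorant `D` of `exp (-Y/8)`
  let W : Ω → ℝ := fun ω => G ω * Real.exp (v ω / 16)
  let D : Ω → ℝ := (fun _ => (1 : ℝ)) + ((-(1 / 8) : ℝ) • Y + (1 / 16 : ℝ) • q)
  have hYqi : Integrable ((-(1 / 8) : ℝ) • Y + (1 / 16 : ℝ) • q) P :=
    (hYi.smul _).add (hqi.smul _)
  have hDi : Integrable D P := (integrable_const _).add hYqi
  have hWm : StronglyMeasurable[m] W :=
    hG.mul (Real.continuous_exp.comp_stronglyMeasurable (hvm.measurable.div_const 16).stronglyMeasurable)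
  have hW0 : ∀ ω, 0 ≤ W ω := fun ω => mul_nonneg (hG0 ω) (Real.exp_pos _).le
  have hWb : ∀ᵐ ω ∂P, ‖W ω‖ ≤ C * Real.exp 1 := by
    filter_upwards [hGC, hv01] with ω w1 w2
    rw [Real.norm_eq_abs, abs_of_nonneg (hW0 ω)]
    have : Real.exp (v ω / 16) ≤ Real.exp 1 := Real.exp_le_exp.2 (by linarith [w2.2])
    exact mul_le_mul w1 this (Real.exp_pos _).le ((hG0 ω).trans w1)
  have hWDi : Integrable (W * D) P :=
    hDi.bdd_mul (hWm.mono hm).aestronglyMeasurable hWb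
  have hGi : Integrable G P := by
    refine Integrable.of_bound (C := C) (hG.mono hm).aestronglyMeasurable ?_
    filter_upwards [hGC] with ω w
    rwa [Real.norm_eq_abs, abs_of_nonneg (hG0 ω)]
  have hcD : P[D | m] =ᵐ[P] fun ω => 1 - v ω / 16 := by
    have e1 := condExp_add (integrable_const (μ := P) (1 : ℝ)) hYqi m
    have e2 := condExp_add (hYi.smul (-(1 / 8) : ℝ)) (hqi.smul (1 / 16 : ℝ)) m
    have e3 := condExp_smul (μ := P) (-(1 / 8) : ℝ) Y m
    have e4 := condExp_smul (μ := P) (1 / 16 : ℝ) q m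
    filter_upwards [e1, e2, e3, e4, hmean] with ω w1 w2 w3 w4 w5
    simp only [D]
    rw [w1, Pi.add_apply, w2, Pi.add_apply, w3, w4, condExp_const hm]
    simp only [Pi.smul_apply, smul_eq_mul, w5, ← hv]
    ring
  have hpoint : ∀ ω, G ω * Real.exp (v ω / 16 - Y ω / 8) ≤ (W * D) ω := by
    intro ω
    have hb := abs_le.1 (hY1 ω)
    have he : Real.exp (-(Y ω / 8)) ≤ D ω := by
      have h8 : |-(Y ω / 8)| ≤ 1 := by rw [abs_le]; constructor <;> linarith
      have := (abs_le.1 (Real.abs_exp_sub_one_sub_id_le h8)).2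
      simp only [D, Pi.add_apply, Pi.smul_apply, smul_eq_mul]
      nlinarith [hYq ω]
    rw [sub_eq_add_neg, Real.exp_add, ← mul_assoc]
    exact mul_le_mul_of_nonneg_left he (hW0 ω)
  calc ∫ ω, G ω * Real.exp (v ω / 16 - Y ω / 8) ∂P
      ≤ ∫ ω, (W * D) ω ∂P :=
        integral_mono_of_nonneg
          (Filter.Eventually.of_forall fun ω => mul_nonneg (hG0 ω) (Real.exp_pos _).le) hWDi
          (Filter.Eventually.of_forall hpoint)
    _ = ∫ ω, (P[W * D | m]) ω ∂P := (integral_condExp hm).symm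
    _ ≤ ∫ ω, G ω ∂P := by
        refine integral_mono_ae integrable_condExp hGi ?_
        filter_upwards [condExp_mul_of_stronglyMeasurable_left hWm hWDi hDi, hcD] with ω w1 w2
        rw [w1, Pi.mul_apply, w2]
        have h1 : 1 - v ω / 16 ≤ Real.exp (-(v ω / 16)) := by
          linarith [Real.add_one_le_exp (-(v ω / 16))]
        calc W ω * (1 - v ω / 16) ≤ W ω * Real.exp (-(v ω / 16)) :=
              mul_le_mul_of_nonneg_left h1 (hW0 ω)
          _ = G ω := by
              simp only [W]
              rw [mul_assoc, ← Real.exp_add, add_neg_cancel, Real.exp_zero, mul_one]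

/-- The exponential process `exp (∑ (E[q_i | ℋ_{i-1}]/16 - Y_i/8))` has expectation at most one. -/
lemma integral_exp_sum_le_one {Ω : Type*} {m0 : MeasurableSpace Ω} {P : Measure Ω}
    [IsProbabilityMeasure P] (ℋ : ℕ → MeasurableSpace Ω) (hℋ : ∀ i, ℋ i ≤ m0)
    (hmono : Monotone ℋ) {Y q : ℕ → Ω → ℝ}
    (hY : ∀ i, 1 ≤ i → Measurable[ℋ i] (Y i)) (hq : ∀ i, Measurable (q i))
    (hY1 : ∀ i ω, |Y i ω| ≤ 1) (hq1 : ∀ i ω, q i ω ∈ Set.Icc (0 : ℝ) 1)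
    (hYq : ∀ i ω, Y i ω ^ 2 ≤ 4 * q i ω)
    (hmean : ∀ i, 1 ≤ i → P[Y i | ℋ (i - 1)] =ᵐ[P] P[q i | ℋ (i - 1)]) (n : ℕ) :
    Integrable (fun ω => Real.exp
      (∑ i ∈ Finset.Icc 1 n, ((P[q i | ℋ (i - 1)]) ω / 16 - Y i ω / 8))) P ∧
    ∫ ω, Real.exp
      (∑ i ∈ Finset.Icc 1 n, ((P[q i | ℋ (i - 1)]) ω / 16 - Y i ω / 8)) ∂P ≤ 1 := by
  have hmeas : ∀ n, StronglyMeasurable[ℋ n] (fun ω => Real.exp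
      (∑ i ∈ Finset.Icc 1 n, ((P[q i | ℋ (i - 1)]) ω / 16 - Y i ω / 8))) := by
    intro n
    refine Real.continuous_exp.comp_stronglyMeasurable
      (Finset.stronglyMeasurable_fun_sum _ fun i hi => ?_)
    obtain ⟨hi1, hin⟩ := Finset.mem_Icc.1 hi
    have hv : StronglyMeasurable[ℋ n] (P[q i | ℋ (i - 1)]) :=
      stronglyMeasurable_condExp.mono (hmono (by omega))
    exact ((hv.measurable.div_const 16).sub
      (((hY i hi1).mono (hmono hin) le_rfl).div_const 8)).stronglyMeasurable
  have hbdd : ∀ n : ℕ, ∀ᵐ ω ∂P, Real.exp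
      (∑ i ∈ Finset.Icc 1 n, ((P[q i | ℋ (i - 1)]) ω / 16 - Y i ω / 8)) ≤ Real.exp n := by
    intro n
    have hall : ∀ᵐ ω ∂P, ∀ i, (P[q i | ℋ (i - 1)]) ω ∈ Set.Icc (0 : ℝ) 1 :=
      ae_all_iff.2 fun i => condExp_mem_unitInterval (hℋ _) (hq i) (hq1 i)
    filter_upwards [hall] with ω w
    refine Real.exp_le_exp.2 ?_
    calc _ ≤ ∑ i ∈ Finset.Icc 1 n, (1 : ℝ) := Finset.sum_le_sum fun i _ => by
            linarith [(w i).2, (abs_le.1 (hY1 i ω)).1]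
      _ = n := by simp
  refine ⟨Integrable.of_bound (C := Real.exp n) ((hmeas n).mono (hℋ n)).aestronglyMeasurable ?_, ?_⟩
  · filter_upwards [hbdd n] with ω w
    rwa [Real.norm_eq_abs, abs_of_pos (Real.exp_pos _)]
  · induction n with
    | zero => simp
    | succ n ih =>
      refine le_trans (le_of_eq ?_) ((integral_exp_step (P := P) (hℋ n) (hmeas n)
        (fun ω => (Real.exp_pos _).le) (hbdd n)
        ((hY (n + 1) (by omega)).mono (hℋ _) le_rfl) (hq (n + 1)) (hY1 _) (hq1 _) (hYq _)
        (hmean (n + 1) (by omega))).trans ih)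
      refine integral_congr_ae (Filter.Eventually.of_forall fun ω => ?_)
      simp only
      rw [Finset.sum_Icc_succ_top (by omega), Real.exp_add, Nat.add_sub_cancel]


/-- **Uniform convergence over the function class `F`.**
Fix `t ≥ 2` and `δ_t ∈ (0, 1/e²)`.  For an arbitrary (possibly randomized) contextual
bandit algorithm, with probability at least `1 - log₂(t-1)·δ_t`, simultaneously for all
`f ∈ F`:
`∑_{i=1}^{t-1} E[(f(x_i,a_i) - f*(x_i,a_i))² | H_{i-1}] ≤ 68 log(|F|/δ_t) + 2 ∑_{i=1}^{t-1} Y_{f,i}`,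
where `Y_{f,i} = (f(x_i,a_i) - r_i)² - (f*(x_i,a_i) - r_i)²`. -/
theorem stmt_6
    {Ω X : Type*} [MeasurableSpace Ω] [MeasurableSpace X]
    (P : Measure Ω) [IsProbabilityMeasure P]
    (Dx : Measure X) [IsProbabilityMeasure Dx]
    (K : ℕ) (hK : 1 ≤ K)
    -- finite function class, realizability
    (F : Finset (X → ℕ → ℝ))
    (hFmeas : ∀ f ∈ F, ∀ k, Measurable (fun x' => f x' k))
    (hFrange : ∀ f ∈ F, ∀ x' k, f x' k ∈ Set.Icc (0 : ℝ) 1)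
    (fstar : X → ℕ → ℝ) (hfstar : fstar ∈ F)
    -- the stochastic processes of contexts, actions and observed rewards
    (x : ℕ → Ω → X) (a : ℕ → Ω → ℕ) (r : ℕ → Ω → ℝ)
    (hx_meas : ∀ i, Measurable (x i))
    (ha_meas : ∀ i, Measurable (a i))
    (ha_range : ∀ i ω, 1 ≤ i → a i ω ∈ Finset.Icc 1 K)
    (hr_meas : ∀ i, Measurable (r i))
    (hr_range : ∀ i ω, r i ω ∈ Set.Icc (0 : ℝ) 1)
    -- contexts are i.i.d. with law `Dx`, each independent of the past history
    (hx_law : ∀ i, 1 ≤ i → P.map (x i) = Dx)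
    (hx_indep : ∀ i, 1 ≤ i →
      Indep (MeasurableSpace.comap (x i) inferInstance) (histFilt x a r (i - 1)) P)
    -- realizability: the observed reward has conditional mean `f*(x_i, a_i)` given the
    -- history, the current context and the chosen action
    (hmean : ∀ i, 1 ≤ i →
      P[r i | histFilt x a r (i - 1) ⊔ MeasurableSpace.comap (x i) inferInstance
          ⊔ MeasurableSpace.comap (a i) inferInstance]
        =ᵐ[P] fun ω => fstar (x i ω) (a i ω))
    (t : ℕ) (ht : 2 ≤ t)
    (δt : ℝ) (hδt : δt ∈ Set.Ioo (0 : ℝ) (1 / Real.exp 2)) :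
    ENNReal.ofReal (1 - Real.logb 2 ((t : ℝ) - 1) * δt) ≤
      P {ω | ∀ f ∈ F,
        ∑ i ∈ Finset.Icc 1 (t - 1),
            (P[(fun ω' => (f (x i ω') (a i ω') - fstar (x i ω') (a i ω')) ^ 2) |
                histFilt x a r (i - 1)]) ω
          ≤ 68 * Real.log (F.card / δt)
            + 2 * ∑ i ∈ Finset.Icc 1 (t - 1),
                ((f (x i ω) (a i ω) - r i ω) ^ 2
                  - (fstar (x i ω) (a i ω) - r i ω) ^ 2)} := by
  obtain ⟨hδ0, hδ1⟩ := hδt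
  have hHle : ∀ i, histFilt x a r i ≤ ‹MeasurableSpace Ω› := fun i =>
    iSup₂_le fun j _ => ((hx_meas j).prodMk ((ha_meas j).prodMk (hr_meas j))).comap_le
  have hHmono : Monotone (histFilt x a r) := fun i j hij =>
    biSup_mono fun k hk => Finset.Icc_subset_Icc_right hij hk
  have hH : ∀ i, 1 ≤ i → Measurable[histFilt x a r i] (fun ω => (x i ω, a i ω, r i ω)) := by
    intro i hi
    refine Measurable.mono (comap_measurable _) ?_ le_rfl
    exact le_iSup₂ (f := fun j (_ : j ∈ Finset.Icc 1 i) =>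
      MeasurableSpace.comap (fun ω => (x j ω, a j ω, r j ω)) inferInstance) i
      (Finset.mem_Icc.2 ⟨hi, le_rfl⟩)
  have hFm : ∀ f ∈ F, Measurable (fun p : X × ℕ => f p.1 p.2) := fun f hf =>
    measurable_from_prod_countable_left fun k => hFmeas f hf k
  let q : (X → ℕ → ℝ) → ℕ → Ω → ℝ := fun f i ω => (f (x i ω) (a i ω) - fstar (x i ω) (a i ω)) ^ 2
  let Y : (X → ℕ → ℝ) → ℕ → Ω → ℝ := fun f i ω =>
    (f (x i ω) (a i ω) - r i ω) ^ 2 - (fstar (x i ω) (a i ω) - r i ω) ^ 2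
  have hxa : ∀ i, Measurable (fun ω => (x i ω, a i ω)) := fun i =>
    (hx_meas i).prodMk (ha_meas i)
  have hq : ∀ f ∈ F, ∀ i, Measurable (q f i) := fun f hf i =>
    (((hFm f hf).comp (hxa i)).sub ((hFm fstar hfstar).comp (hxa i))).pow_const 2
  have hY : ∀ f ∈ F, ∀ i, 1 ≤ i → Measurable[histFilt x a r i] (Y f i) := by
    intro f hf i hi
    have h : Measurable (fun p : X × ℕ × ℝ =>
        (f p.1 p.2.1 - p.2.2) ^ 2 - (fstar p.1 p.2.1 - p.2.2) ^ 2) := by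
      have hp : Measurable (fun p : X × ℕ × ℝ => (p.1, p.2.1)) := by fun_prop
      have hp2 : Measurable (fun p : X × ℕ × ℝ => p.2.2) := by fun_prop
      exact ((((hFm f hf).comp hp).sub hp2).pow_const 2).sub
        ((((hFm fstar hfstar).comp hp).sub hp2).pow_const 2)
    exact h.comp (hH i hi)
  have hq1 : ∀ f ∈ F, ∀ i ω, q f i ω ∈ Set.Icc (0 : ℝ) 1 := by
    intro f hf i ω
    obtain ⟨h1, h2⟩ := hFrange f hf (x i ω) (a i ω)
    obtain ⟨h3, h4⟩ := hFrange fstar hfstar (x i ω) (a i ω)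
    refine ⟨sq_nonneg _, ?_⟩
    simp only [q]
    nlinarith
  have hY1 : ∀ f ∈ F, ∀ i ω, |Y f i ω| ≤ 1 := by
    intro f hf i ω
    obtain ⟨h1, h2⟩ := hFrange f hf (x i ω) (a i ω)
    obtain ⟨h3, h4⟩ := hFrange fstar hfstar (x i ω) (a i ω)
    obtain ⟨h5, h6⟩ := hr_range i ω
    rw [abs_le]
    constructor <;> simp only [Y] <;> nlinarith
  have hYq : ∀ f ∈ F, ∀ i ω, Y f i ω ^ 2 ≤ 4 * q f i ω := by
    intro f hf i ω
    obtain ⟨h1, h2⟩ := hFrange f hf (x i ω) (a i ω)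
    obtain ⟨h3, h4⟩ := hFrange fstar hfstar (x i ω) (a i ω)
    obtain ⟨h5, h6⟩ := hr_range i ω
    have e : Y f i ω ^ 2 = (f (x i ω) (a i ω) + fstar (x i ω) (a i ω) - 2 * r i ω) ^ 2 * q f i ω := by
      simp only [Y, q]
      ring
    rw [e]
    refine mul_le_mul_of_nonneg_right ?_ (hq1 f hf i ω).1
    nlinarith
  have hmeanY : ∀ f ∈ F, ∀ i, 1 ≤ i →
      P[Y f i | histFilt x a r (i - 1)] =ᵐ[P] P[q f i | histFilt x a r (i - 1)] := by
    intro f hf i hi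
    have hxm : Measurable[histFilt x a r (i - 1) ⊔ MeasurableSpace.comap (x i) inferInstance
        ⊔ MeasurableSpace.comap (a i) inferInstance] (fun ω => (x i ω, a i ω)) := by
      refine Measurable.prodMk ?_ ?_
      · exact (comap_measurable (x i)).mono (le_sup_right.trans le_sup_left) le_rfl
      · exact (comap_measurable (a i)).mono le_sup_right le_rfl
    exact condExp_excess_loss (le_sup_left.trans le_sup_left)
      (sup_le (sup_le (hHle _) (hx_meas i).comap_le) (ha_meas i).comap_le)
      ((hFm f hf).comp hxm) ((hFm fstar hfstar).comp hxm) (hr_meas i)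
      (fun ω => hFrange f hf _ _) (fun ω => hFrange fstar hfstar _ _) (hr_range i) (hmean i hi)
  have hcard : (1 : ℝ) ≤ F.card := by
    exact_mod_cast Finset.card_pos.2 ⟨fstar, hfstar⟩
  have hcδ : (0 : ℝ) < F.card / δt := by positivity
  have hlog : 2 ≤ Real.log (F.card / δt) := by
    rw [Real.le_log_iff_exp_le hcδ, le_div_iff₀ hδ0]
    have := (lt_div_iff₀ (Real.exp_pos 2)).1 hδ1
    nlinarith
  rcases Nat.lt_or_ge t 3 with ht3 | ht3
  -- `t = 2`: the inequality holds almost surely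
  · obtain rfl : t = 2 := by omega
    have hae : ∀ᵐ ω ∂P, ∀ f ∈ F,
        (P[q f 1 | histFilt x a r (1 - 1)]) ω ∈ Set.Icc (0 : ℝ) 1 :=
      (Finset.eventually_all F).2 fun f hf =>
        condExp_mem_unitInterval (hHle _) (hq f hf 1) (hq1 f hf 1)
    have hone : P {ω | ∀ f ∈ F, ∑ i ∈ Finset.Icc 1 (2 - 1),
        (P[q f i | histFilt x a r (i - 1)]) ω
          ≤ 68 * Real.log (F.card / δt) + 2 * ∑ i ∈ Finset.Icc 1 (2 - 1), Y f i ω} = 1 := by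
      rw [← measure_univ (μ := P)]
      refine measure_congr (Filter.eventuallyEq_univ.2 ?_)
      filter_upwards [hae] with ω w f hf
      simp only [Nat.add_one_sub_one, Finset.Icc_self, Finset.sum_singleton]
      linarith [(w f hf).2, (abs_le.1 (hY1 f hf 1 ω)).1]
    refine le_of_le_of_eq ?_ hone.symm
    norm_num
  -- `t ≥ 3`: union bound over `F` of the exponential Markov inequality
  · set S := {ω | ∀ f ∈ F,
        ∑ i ∈ Finset.Icc 1 (t - 1),
            (P[(fun ω' => (f (x i ω') (a i ω') - fstar (x i ω') (a i ω')) ^ 2) |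
                histFilt x a r (i - 1)]) ω
          ≤ 68 * Real.log (F.card / δt)
            + 2 * ∑ i ∈ Finset.Icc 1 (t - 1),
                ((f (x i ω) (a i ω) - r i ω) ^ 2
                  - (fstar (x i ω) (a i ω) - r i ω) ^ 2)} with hS
    let Z : (X → ℕ → ℝ) → Ω → ℝ := fun f ω => Real.exp (∑ i ∈ Finset.Icc 1 (t - 1),
      ((P[q f i | histFilt x a r (i - 1)]) ω / 16 - Y f i ω / 8))
    have hbad : ∀ f ∈ F, P {ω | F.card / δt ≤ Z f ω} ≤ ENNReal.ofReal (δt / F.card) := by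
      intro f hf
      obtain ⟨hi, hle⟩ := integral_exp_sum_le_one (P := P) (histFilt x a r) hHle hHmono
        (hY f hf) (hq f hf) (hY1 f hf) (hq1 f hf) (hYq f hf) (hmeanY f hf) (t - 1)
      have hM := mul_meas_ge_le_integral_of_nonneg (μ := P) (f := Z f)
        (Filter.Eventually.of_forall fun ω => (Real.exp_pos _).le) hi (F.card / δt)
      have hM2 : P.real {ω | F.card / δt ≤ Z f ω} ≤ δt / F.card := by
        rw [← inv_div (F.card : ℝ) δt, ← mul_one (F.card / δt : ℝ)⁻¹, le_inv_mul_iff₀ hcδ]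
        exact hM.trans hle
      exact (ENNReal.le_ofReal_iff_toReal_le (measure_ne_top _ _) (by positivity)).2 hM2
    have hsub : Sᶜ ⊆ ⋃ f ∈ F, {ω | F.card / δt ≤ Z f ω} := by
      intro ω hω
      simp only [hS, Set.mem_compl_iff, Set.mem_ofPred_eq, not_forall, not_le] at hω
      obtain ⟨f, hf, hlt⟩ := hω
      refine Set.mem_biUnion hf ?_
      change F.card / δt ≤ Real.exp _
      rw [← Real.log_le_iff_le_exp hcδ, Finset.sum_sub_distrib, ← Finset.sum_div,
        ← Finset.sum_div]
      change _ < ∑ i ∈ Finset.Icc 1 (t - 1), (P[q f i | histFilt x a r (i - 1)]) ω at hlt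
      change 68 * Real.log (F.card / δt) + 2 * ∑ i ∈ Finset.Icc 1 (t - 1), Y f i ω < _ at hlt
      linarith
    have hSc : P Sᶜ ≤ ENNReal.ofReal δt := by
      calc P Sᶜ ≤ ∑ f ∈ F, P {ω | F.card / δt ≤ Z f ω} :=
            (measure_mono hsub).trans (measure_biUnion_finset_le _ _)
        _ ≤ ∑ f ∈ F, ENNReal.ofReal (δt / F.card) := Finset.sum_le_sum hbad
        _ = ENNReal.ofReal δt := by
            rw [Finset.sum_const, nsmul_eq_mul, ← ENNReal.ofReal_natCast,
              ← ENNReal.ofReal_mul (by positivity), mul_div_cancel₀ _ (by positivity)]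
    have hlb : 1 ≤ Real.logb 2 ((t : ℝ) - 1) := by
      have : (3 : ℝ) ≤ t := by exact_mod_cast ht3
      rw [Real.le_logb_iff_rpow_le (by norm_num) (by linarith), Real.rpow_one]
      linarith
    calc ENNReal.ofReal (1 - Real.logb 2 ((t : ℝ) - 1) * δt)
        ≤ ENNReal.ofReal (1 - δt) := ENNReal.ofReal_le_ofReal (by nlinarith)
      _ = 1 - ENNReal.ofReal δt := by
          rw [ENNReal.ofReal_sub _ hδ0.le, ENNReal.ofReal_one]
      _ ≤ P S := by
          -- subadditivity needs no measurability of `S`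
          rw [tsub_le_iff_right]
          calc (1 : ENNReal) = P (S ∪ Sᶜ) := by rw [Set.union_compl_self, measure_univ]
            _ ≤ P S + P Sᶜ := measure_union_le _ _
            _ ≤ P S + ENNReal.ofReal δt := by gcongr
end

section
/- Let W ⊆ ℝ^d be an r-dimensional linear subspace with basis A_1,...,A_r, and for w ∈ W let b_w ∈ ℝ^r denote its coordinate vector, i.e. w = Σ_{k=1}^r (b_w)_k A_k. Let σ : ℝ → ℝ be differentiable with 0 < m ≤ σ'(u) ≤ κ·m for all u ∈ ℝ, where κ ≥ 1. Let a, a_1,...,a_n ∈ W and suppose N := Σ_{i=1}^n b_{a_i} b_{a_i}ᵀ is invertible. Then for all θ₁, θ₂ ∈ ℝ^d: (σ(θ₁ᵀa) − σ(θ₂ᵀa))² ≤ κ² (b_aᵀ N⁻¹ b_a) · Σ_{i=1}^n (σ(θ₁ᵀa_i) − σ(θ₂ᵀa_i))². (This verifies the counterfactual action divergence for the generalized linear model with heterogeneous, low-dimensional action sets.) -/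
/-!
The mean value theorem gives `σ x - σ y = σ'(c) (x - y)`, so squared increments of `σ` lie
between `m² (x - y)²` and `(κ m)² (x - y)²`, and it suffices to treat the identity link
with constant `1` in place of `κ²`. Put `z k = (θ₁ - θ₂)ᵀ A_k`, so that
`(θ₁ - θ₂)ᵀ w = zᵀ b_w`, and `v = N⁻¹ b_a`. Then `zᵀ b_a = zᵀ N v = ∑ i, (b_{a_i}ᵀ z) (b_{a_i}ᵀ v)`,
and Cauchy–Schwarz concludes because `∑ i, (b_{a_i}ᵀ v)² = vᵀ N v = b_aᵀ N⁻¹ b_a`.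
-/

open Matrix

theorem dotProduct_sum_vecMulVec_mulVec {r n : ℕ} (b : Fin n → Fin r → ℝ) (x y : Fin r → ℝ) :
    x ⬝ᵥ ((∑ i, Matrix.vecMulVec (b i) (b i)) *ᵥ y) = ∑ i, (b i ⬝ᵥ x) * (b i ⬝ᵥ y) := by
  rw [Matrix.sum_mulVec, dotProduct_sum]
  refine Finset.sum_congr rfl fun i _ => ?_
  rw [Matrix.vecMulVec_mulVec, dotProduct_comm (b i) x]
  simp [dotProduct_smul, mul_comm]

/-- The case of the identity link: Cauchy–Schwarz for the form defined by
`∑ i, b i (b i)ᵀ`, together with nonnegativity of the inverse form. -/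
theorem sq_dotProduct_le {r n : ℕ} (b : Fin n → Fin r → ℝ) (N : Matrix (Fin r) (Fin r) ℝ)
    (hN : N = ∑ i, Matrix.vecMulVec (b i) (b i)) (hinv : IsUnit N.det) (z c : Fin r → ℝ) :
    (z ⬝ᵥ c) ^ 2 ≤ (c ⬝ᵥ (N⁻¹ *ᵥ c)) * ∑ i, (b i ⬝ᵥ z) ^ 2 ∧ 0 ≤ c ⬝ᵥ (N⁻¹ *ᵥ c) := by
  have hv : N *ᵥ (N⁻¹ *ᵥ c) = c := by
    rw [Matrix.mulVec_mulVec, Matrix.mul_nonsing_inv _ hinv, Matrix.one_mulVec]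
  have h1 : z ⬝ᵥ c = ∑ i, (b i ⬝ᵥ z) * (b i ⬝ᵥ (N⁻¹ *ᵥ c)) := by
    rw [← dotProduct_sum_vecMulVec_mulVec, ← hN, hv]
  have h2 : c ⬝ᵥ (N⁻¹ *ᵥ c) = ∑ i, (b i ⬝ᵥ (N⁻¹ *ᵥ c)) ^ 2 := by
    simp only [pow_two]
    rw [← dotProduct_sum_vecMulVec_mulVec, ← hN, hv, dotProduct_comm]
  refine ⟨?_, h2 ▸ Finset.sum_nonneg fun i _ => sq_nonneg _⟩
  rw [h1, h2, mul_comm (∑ i, (b i ⬝ᵥ (N⁻¹ *ᵥ c)) ^ 2)]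
  exact Finset.sum_mul_sq_le_sq_mul_sq _ _ _

theorem exists_sub_eq_deriv_mul {σ : ℝ → ℝ} (hσ : Differentiable ℝ σ) (x y : ℝ) :
    ∃ c, σ x - σ y = deriv σ c * (x - y) := by
  rcases lt_trichotomy x y with h | h | h
  · obtain ⟨c, -, hc⟩ := exists_deriv_eq_slope σ h hσ.continuous.continuousOn hσ.differentiableOn
    refine ⟨c, ?_⟩
    rw [hc]
    field_simp [sub_ne_zero.2 h.ne']
    ring
  · exact ⟨0, by simp [h]⟩
  · obtain ⟨c, -, hc⟩ := exists_deriv_eq_slope σ h hσ.continuous.continuousOn hσ.differentiableOn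
    refine ⟨c, ?_⟩
    rw [hc, div_mul_cancel₀ _ (sub_ne_zero.2 h.ne')]

theorem sq_sub_bounds {σ : ℝ → ℝ} {m κ : ℝ} (hm : 0 < m) (hσ : Differentiable ℝ σ)
    (hσ' : ∀ u, m ≤ deriv σ u ∧ deriv σ u ≤ κ * m) (x y : ℝ) :
    m ^ 2 * (x - y) ^ 2 ≤ (σ x - σ y) ^ 2 ∧
      (σ x - σ y) ^ 2 ≤ (κ * m) ^ 2 * (x - y) ^ 2 := by
  obtain ⟨c, hc⟩ := exists_sub_eq_deriv_mul hσ x y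
  obtain ⟨h1, h2⟩ := hσ' c
  have h0 : 0 ≤ deriv σ c := hm.le.trans h1
  rw [hc, mul_pow]
  constructor <;> gcongr

/-- **Counterfactual action divergence for the generalized linear model with
heterogeneous, low-dimensional action sets.**
Let `A_1, ..., A_r` be a basis of an `r`-dimensional subspace `W ⊆ ℝ^d`, and for `w ∈ W`
let `b_w ∈ ℝ^r` denote its coordinate vector (`w = ∑_k (b_w)_k A_k`).  Let `σ : ℝ → ℝ`
be differentiable with `0 < m ≤ σ'(u) ≤ κ m` for all `u`, `κ ≥ 1`.  Let
`a, a_1, ..., a_n ∈ W` with `N := ∑_i b_{a_i} b_{a_i}ᵀ` invertible.  Then for all `θ₁, θ₂`,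
`(σ(θ₁ᵀa) - σ(θ₂ᵀa))² ≤ κ² (b_aᵀ N⁻¹ b_a) ∑_i (σ(θ₁ᵀa_i) - σ(θ₂ᵀa_i))²`. -/
theorem stmt_13 (d r n : ℕ) (A : Fin r → Fin d → ℝ)
    (hA : LinearIndependent ℝ A)
    (σ : ℝ → ℝ) (m κ : ℝ) (hκ : 1 ≤ κ) (hm : 0 < m)
    (hσ : Differentiable ℝ σ)
    (hσ' : ∀ u, m ≤ deriv σ u ∧ deriv σ u ≤ κ * m)
    (a : Fin d → ℝ) (as : Fin n → Fin d → ℝ)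
    (ba : Fin r → ℝ) (bas : Fin n → Fin r → ℝ)
    (ha : a = ∑ k, ba k • A k)
    (has : ∀ i, as i = ∑ k, bas i k • A k)
    (N : Matrix (Fin r) (Fin r) ℝ)
    (hN : N = ∑ i, Matrix.vecMulVec (bas i) (bas i))
    (hinv : IsUnit N.det)
    (θ₁ θ₂ : Fin d → ℝ) :
    (σ (θ₁ ⬝ᵥ a) - σ (θ₂ ⬝ᵥ a)) ^ 2
      ≤ κ ^ 2 * (ba ⬝ᵥ (N⁻¹ *ᵥ ba)) *
          ∑ i, (σ (θ₁ ⬝ᵥ as i) - σ (θ₂ ⬝ᵥ as i)) ^ 2 := by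
  have key : ∀ b : Fin r → ℝ, θ₁ ⬝ᵥ (∑ k, b k • A k) - θ₂ ⬝ᵥ (∑ k, b k • A k)
      = b ⬝ᵥ (fun k => (θ₁ - θ₂) ⬝ᵥ A k) := by
    intro b
    rw [← sub_dotProduct, dotProduct_sum]
    simp only [dotProduct_smul, smul_eq_mul]
    rfl
  set z : Fin r → ℝ := fun k => (θ₁ - θ₂) ⬝ᵥ A k
  obtain ⟨hcs, hq⟩ := sq_dotProduct_le bas N hN hinv z ba
  have hup := (sq_sub_bounds hm hσ hσ' (θ₁ ⬝ᵥ a) (θ₂ ⬝ᵥ a)).2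
  have hlow : m ^ 2 * ∑ i, (bas i ⬝ᵥ z) ^ 2
      ≤ ∑ i, (σ (θ₁ ⬝ᵥ as i) - σ (θ₂ ⬝ᵥ as i)) ^ 2 := by
    rw [Finset.mul_sum]
    refine Finset.sum_le_sum fun i _ => ?_
    rw [← key, ← has i]
    exact (sq_sub_bounds hm hσ hσ' _ _).1
  have hz : θ₁ ⬝ᵥ a - θ₂ ⬝ᵥ a = z ⬝ᵥ ba := by rw [ha, key, dotProduct_comm]
  calc (σ (θ₁ ⬝ᵥ a) - σ (θ₂ ⬝ᵥ a)) ^ 2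
      ≤ (κ * m) ^ 2 * (z ⬝ᵥ ba) ^ 2 := by rw [← hz]; exact hup
    _ ≤ (κ * m) ^ 2 * ((ba ⬝ᵥ (N⁻¹ *ᵥ ba)) * ∑ i, (bas i ⬝ᵥ z) ^ 2) := by gcongr
    _ = κ ^ 2 * (ba ⬝ᵥ (N⁻¹ *ᵥ ba)) * (m ^ 2 * ∑ i, (bas i ⬝ᵥ z) ^ 2) := by ring
    _ ≤ _ := by gcongr
end
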